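/- The quasi-modular Eisenstein series E₂ satisfies the Chazy equation: for every τ in the upper half-plane ℍ, 2E₂'''(τ) − 2E₂(τ)E₂''(τ) + 3(E₂'(τ))² = 0. -/

import Mathlib

open Complex

noncomputable section

/-- The normalized derivative `F' = (2πi)⁻¹ dF/dτ`. -/
def nderiv (F : ℂ → ℂ) : ℂ → ℂ := fun τ => (2 * Real.pi * Complex.I)⁻¹ * deriv F τ

/-- `q = e^{2πiτ}`. -/
def qq (τ : ℂ) : ℂ := Complex.exp (2 * Real.pi * Complex.I * τ)

/-- Sum of the `k`-th powers of the positive divisors of `n`. -/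
def sigma' (k n : ℕ) : ℕ := ∑ d ∈ n.divisors, d ^ k

/-- The Eisenstein series `E₂`. -/
def E2 : ℂ → ℂ := fun τ => 1 - 24 * ∑' n : ℕ, (sigma' 1 (n + 1) : ℂ) * qq τ ^ (n + 1)

/-!
A level-one modular form of weight less than 12 is determined by its value at `i∞`, since there are
no nonzero cusp forms in these weights. The Serre derivative `ϑ_k F = F' - (k / 12) E₂ F` raises the
weight by two and multiplies the value at `i∞` by `-k / 12`, because `F'` vanishes there by Cauchy's
estimate. Hence `ϑ₁ E₂`, `ϑ₄ E₄`, `ϑ₆ E₆` are constant multiples of `E₄`, `E₆`, `E₄ ^ 2`. These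
are Ramanujan's identities; they express every derivative of `E₂` as a polynomial in `E₂`, `E₄`,
`E₆`, and the Chazy equation becomes an identity between polynomials.
-/

section Ramanujan

open UpperHalfPlane hiding I
open Derivative Filter Function.Periodic
open ModularForm (E₄ E₆)
open scoped Manifold MatrixGroups ModularForm Real Topology

local notation "E₂" => EisensteinSeries.E2
local notation "𝕢" => qParam

variable {F : ℍ → ℂ}

lemma tendsto_atImInfty_of_hasSum_qExpansion {h : ℝ} (hh : 0 < h) {c : ℕ → ℂ}
    (hF : ∀ τ : ℍ, HasSum (fun m ↦ c m • 𝕢 h τ ^ m) (F τ)) :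
    Tendsto F atImInfty (𝓝 (c 0)) := by
  have hq : Tendsto (fun τ : ℍ ↦ 𝕢 h τ) atImInfty (𝓝 0) := qParam_tendsto_atImInfty hh
  have hq_le : ∀ᶠ τ : ℍ in atImInfty, ‖𝕢 h τ‖ ≤ ‖𝕢 h UpperHalfPlane.I‖ :=
    hq.norm.eventually_le_const (by simp [qParam_ne_zero])
  have hterm (m : ℕ) : Tendsto (fun τ : ℍ ↦ c m • 𝕢 h τ ^ m) atImInfty (𝓝 (c m • 0 ^ m)) :=
    (hq.pow m).const_smul (c m)
  have htsum := tendsto_tsum_of_dominated_convergence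
    (hF UpperHalfPlane.I).summable.norm hterm <| by
      filter_upwards [hq_le] with τ hτ m
      simp only [norm_smul, norm_pow]
      gcongr
  have hzero : ∑' m, c m • (0 : ℂ) ^ m = c 0 := by
    rw [tsum_eq_single 0 fun m hm ↦ by simp [hm]]
    simp
  simpa only [hzero, (hF _).tsum_eq] using htsum

lemma tendsto_E2_atImInfty : Tendsto E₂ atImInfty (𝓝 1) := by
  have hq (τ : ℍ) : HasSum (fun m : ℕ ↦
      (if m = 0 then 1 else -24 * (ArithmeticFunction.sigma 1 m : ℂ)) • 𝕢 1 τ ^ m) (E₂ τ) := by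
    simpa only [qParam, ofReal_one, div_one] using EisensteinSeries.hasSum_qExpansion_E2 (z := τ)
  simpa only [if_pos] using tendsto_atImInfty_of_hasSum_qExpansion one_pos hq

lemma tendsto_E_atImInfty {k : ℕ} (hk : 3 ≤ k) (hk2 : Even k) :
    Tendsto (ModularForm.E hk) atImInfty (𝓝 1) := by
  have hper : Function.Periodic (ModularForm.E hk ∘ ofComplex) (1 : ℝ) :=
    SlashInvariantFormClass.periodic_comp_ofComplex _ one_mem_strictPeriods_SL
  rw [← EisensteinSeries.E_qExpansion_coeff_zero hk hk2]
  exact tendsto_atImInfty_of_hasSum_qExpansion one_pos <|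
    hasSum_qExpansion one_pos hper (ModularFormClass.holo _) (ModularFormClass.bdd_at_infty _)

lemma tendsto_E₄_atImInfty : Tendsto E₄ atImInfty (𝓝 1) :=
  tendsto_E_atImInfty _ (by decide)

lemma tendsto_E₆_atImInfty : Tendsto E₆ atImInfty (𝓝 1) :=
  tendsto_E_atImInfty _ (by decide)

lemma norm_normalizedDerivOfComplex_le (hF : MDiff F) {z : ℍ} {r M : ℝ} (hr : 0 < r)
    (hrz : r < z.im) (hM : ∀ w : ℍ, ‖(w - z : ℂ)‖ = r → ‖F w‖ ≤ M) :
    ‖D F z‖ ≤ M / (2 * π * r) := by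
  have hsub : Metric.closedBall (z : ℂ) r ⊆ upperHalfPlaneSet := fun w hw ↦ by
    have hwz := (abs_im_le_norm (w - z)).trans (mem_closedBall_iff_norm.mp hw)
    rw [sub_im, coe_im] at hwz
    change 0 < w.im
    linarith [neg_le_abs (w.im - z.im)]
  have hderiv : ‖deriv (F ∘ ofComplex) z‖ ≤ M / r := by
    refine norm_deriv_le_of_forall_mem_sphere_norm_le hr
      ((UpperHalfPlane.mdifferentiable_iff.mp hF).diffContOnCl_ball hsub) fun w hw ↦ ?_
    rw [Function.comp_apply,
      ofComplex_apply_of_im_pos (hsub (Metric.sphere_subset_closedBall hw))]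
    exact hM _ (mem_sphere_iff_norm.mp hw)
  calc ‖D F z‖ = (2 * π)⁻¹ * ‖deriv (F ∘ ofComplex) z‖ := by
        simp [normalizedDerivOfComplex, abs_of_pos Real.pi_pos]
    _ ≤ (2 * π)⁻¹ * (M / r) := by gcongr
    _ = M / (2 * π * r) := by field_simp

lemma isZeroAtImInfty_normalizedDerivOfComplex (hF : MDiff F) (hb : IsBoundedAtImInfty F) :
    IsZeroAtImInfty (D F) := by
  obtain ⟨M, A, hM⟩ := isBoundedAtImInfty_iff.mp hb
  have hlim : Tendsto (fun z : ℍ ↦ M / (2 * π * (z.im / 2))) atImInfty (𝓝 0) :=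
    ((tendsto_comap.atTop_div_const two_pos).const_mul_atTop Real.two_pi_pos).const_div_atTop M
  refine squeeze_zero_norm' ?_ hlim
  filter_upwards [tendsto_comap.eventually_ge_atTop (2 * A)] with z hz
  refine norm_normalizedDerivOfComplex_le hF (half_pos z.im_pos) (half_lt_self z.im_pos)
    fun w hw ↦ hM w ?_
  have hwz := (abs_im_le_norm (w - z : ℂ)).trans_eq hw
  rw [sub_im, coe_im, coe_im] at hwz
  linarith [neg_le_abs (w.im - z.im)]

lemma tendsto_serreDerivative_atImInfty (k : ℂ) {c : ℂ} (hF : MDiff F)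
    (hc : Tendsto F atImInfty (𝓝 c)) :
    Tendsto (serreDerivative k F) atImInfty (𝓝 (-(k / 12) * c)) := by
  have hD : Tendsto (D F) atImInfty (𝓝 0) :=
    isZeroAtImInfty_normalizedDerivOfComplex hF (hc.isBigO_one ℝ)
  rw [show -(k / 12) * c = 0 - k * 12⁻¹ * 1 * c by ring]
  exact hD.sub ((tendsto_E2_atImInfty.const_mul (k * 12⁻¹)).mul hc)

lemma eq_zero_of_slash_invariant_of_isZeroAtImInfty {k : ℤ} (hk : k < 12) (hF : MDiff F)
    (hslash : ∀ γ : SL(2, ℤ), F ∣[k] γ = F) (hzero : IsZeroAtImInfty F) : F = 0 := by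
  let f : CuspForm 𝒮ℒ k :=
    { toFun := F
      slash_action_eq' := by
        rintro _ ⟨γ, rfl⟩
        exact hslash γ
      holo' := hF
      zero_at_cusps' := fun hc ↦ (OnePoint.isZeroAt_iff_forall_SL2Z hc).mpr fun γ _ ↦ by
        rwa [hslash γ] }
  have hf : f = 0 :=
    rank_zero_iff_forall_zero.mp (CuspForm.rank_eq_zero_of_weight_lt_twelve hk) f
  exact congrArg DFunLike.coe hf

lemma eq_smul_of_slash_invariant_of_tendsto_atImInfty {k : ℤ} (hk : k < 12) {c : ℂ}
    (hF : MDiff F) (hslash : ∀ γ : SL(2, ℤ), F ∣[k] γ = F) (hc : Tendsto F atImInfty (𝓝 c))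
    {g : ModularForm 𝒮ℒ k} (hg : Tendsto g atImInfty (𝓝 1)) : F = c • ⇑g := by
  refine sub_eq_zero.mp <| eq_zero_of_slash_invariant_of_isZeroAtImInfty hk
    (hF.sub (g.holo'.const_smul c)) (fun γ ↦ ?_) ?_
  · have hgslash : ⇑g ∣[k] γ = ⇑g := g.slash_action_eq' _ ⟨γ, rfl⟩
    rw [sub_eq_add_neg, SlashAction.add_slash, SlashAction.neg_slash, ModularForm.SL_smul_slash,
      hslash, hgslash]
  · have hlim : Tendsto (F - c • ⇑g) atImInfty (𝓝 (c - c * 1)) := hc.sub (hg.const_mul c)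
    rwa [mul_one, sub_self] at hlim

lemma normalizedDerivOfComplex_inv_denom (γ : SL(2, ℤ)) (z : ℍ) :
    D (fun w ↦ (denom γ w)⁻¹) z = -(2 * π * I)⁻¹ * γ 1 0 * (denom γ z)⁻¹ ^ 2 := by
  have hderiv := hasDerivAt_denom_zpow (γ : GL (Fin 2) ℝ) (-1) z
  have heq : (fun w : ℍ ↦ (denom γ w)⁻¹) ∘ ofComplex =ᶠ[𝓝 (z : ℂ)]
      fun w ↦ denom γ w ^ (-1 : ℤ) := by
    filter_upwards [isOpen_upperHalfPlaneSet.mem_nhds z.im_pos] with w hw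
    simp [ofComplex_apply_of_im_pos hw]
  rw [normalizedDerivOfComplex, (hderiv.congr_of_eventuallyEq heq).deriv]
  simp [zpow_neg, mul_assoc]

lemma E2_slash (γ : SL(2, ℤ)) :
    E₂ ∣[(2 : ℤ)] γ = E₂ + (12 * (2 * π * I)⁻¹ * γ 1 0) • fun z : ℍ ↦ (denom γ z)⁻¹ := by
  have hcoeff : 1 / (2 * riemannZeta 2) * (2 * π * I) = -(12 * (2 * π * I)⁻¹) := by
    have hpi : (π : ℂ) ≠ 0 := ofReal_ne_zero.mpr Real.pi_ne_zero
    rw [riemannZeta_two]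
    field_simp
    linear_combination 12 * I_sq
  rw [EisensteinSeries.E2_slash_action]
  ext z
  simp only [EisensteinSeries.D2, Pi.sub_apply, Pi.add_apply, Pi.smul_apply, smul_eq_mul]
  linear_combination -(γ 1 0 * (denom γ z)⁻¹) * hcoeff

-- Taking the Serre derivative in weight 1 rather than 2 makes the quasi-modular correction terms of
-- `D E₂` and `E₂ ^ 2` cancel.
lemma serreDerivative_one_E2_slash (γ : SL(2, ℤ)) :
    serreDerivative 1 E₂ ∣[(4 : ℤ)] γ = serreDerivative 1 E₂ := by
  have hserre : serreDerivative 1 E₂ = serreDerivative (2 : ℤ) E₂ + (12⁻¹ : ℂ) • (E₂ * E₂) := by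
    ext z
    simp only [serreDerivative_apply, Pi.add_apply, Pi.smul_apply, Pi.mul_apply, smul_eq_mul]
    push_cast
    ring
  have hequiv : serreDerivative (2 : ℤ) E₂ ∣[(4 : ℤ)] γ =
      serreDerivative (2 : ℤ) (E₂ ∣[(2 : ℤ)] γ) :=
    serreDerivative_slash_equivariant E2_mdifferentiable
  have hsq : (E₂ * E₂) ∣[(4 : ℤ)] γ = E₂ ∣[(2 : ℤ)] γ * E₂ ∣[(2 : ℤ)] γ :=
    ModularForm.mul_slash_SL2 2 2 γ E₂ E₂
  have hdenom : MDiff fun z : ℍ ↦ (denom γ z)⁻¹ := mdifferentiable_inv_denom _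
  rw [hserre, SlashAction.add_slash, ModularForm.SL_smul_slash, hequiv, hsq, E2_slash]
  ext z
  simp only [serreDerivative_apply, Pi.add_apply, Pi.smul_apply, Pi.mul_apply, smul_eq_mul,
    normalizedDerivOfComplex_add _ _ E2_mdifferentiable (hdenom.const_smul _),
    normalizedDerivOfComplex_smul _ _ hdenom, normalizedDerivOfComplex_inv_denom]
  push_cast
  ring

lemma serreDerivative_eq_smul_of_tendsto_atImInfty {k : ℤ} (hk : k + 2 < 12) {f : ModularForm 𝒮ℒ k}
    (hf : Tendsto f atImInfty (𝓝 1)) {g : ModularForm 𝒮ℒ (k + 2)}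
    (hg : Tendsto g atImInfty (𝓝 1)) : serreDerivative k f = (-(k / 12) : ℂ) • ⇑g := by
  have hlim := tendsto_serreDerivative_atImInfty k f.holo' hf
  rw [mul_one] at hlim
  exact eq_smul_of_slash_invariant_of_tendsto_atImInfty hk
    (serreDerivative_mdifferentiable _ f.holo')
    (fun γ ↦ serreDerivative_slash_invariant f.holo' (f.slash_action_eq' _ ⟨γ, rfl⟩)) hlim hg

theorem normalizedDerivOfComplex_E2 : D E₂ = (12⁻¹ : ℂ) • (E₂ ^ 2 - ⇑E₄) := by
  have hserre : serreDerivative 1 E₂ = (-(1 / 12) * 1 : ℂ) • ⇑E₄ :=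
    eq_smul_of_slash_invariant_of_tendsto_atImInfty (by norm_num)
      (serreDerivative_mdifferentiable 1 E2_mdifferentiable) serreDerivative_one_E2_slash
      (tendsto_serreDerivative_atImInfty 1 E2_mdifferentiable tendsto_E2_atImInfty)
      tendsto_E₄_atImInfty
  ext z
  have hz := congrFun hserre z
  simp only [serreDerivative_apply, Pi.smul_apply, Pi.sub_apply, Pi.pow_apply, smul_eq_mul] at hz ⊢
  linear_combination hz

theorem normalizedDerivOfComplex_E₄ : D E₄ = (3⁻¹ : ℂ) • (E₂ * ⇑E₄ - ⇑E₆) := by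
  have hserre : serreDerivative (4 : ℤ) E₄ = (-((4 : ℤ) / 12) : ℂ) • ⇑E₆ :=
    serreDerivative_eq_smul_of_tendsto_atImInfty (by norm_num) tendsto_E₄_atImInfty
      tendsto_E₆_atImInfty
  ext z
  have hz := congrFun hserre z
  simp only [serreDerivative_apply, Pi.smul_apply, Pi.sub_apply, Pi.mul_apply, smul_eq_mul] at hz ⊢
  push_cast at hz
  linear_combination hz

theorem normalizedDerivOfComplex_E₆ : D E₆ = (2⁻¹ : ℂ) • (E₂ * ⇑E₆ - ⇑E₄ ^ 2) := by
  have hlim : Tendsto (E₄.mul E₄) atImInfty (𝓝 1) := by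
    rw [← one_mul 1]
    exact tendsto_E₄_atImInfty.mul tendsto_E₄_atImInfty
  have hserre : serreDerivative (6 : ℤ) E₆ = (-((6 : ℤ) / 12) : ℂ) • ⇑(E₄.mul E₄) :=
    serreDerivative_eq_smul_of_tendsto_atImInfty (by norm_num) tendsto_E₆_atImInfty hlim
  ext z
  have hz := congrFun hserre z
  simp only [serreDerivative_apply, ModularForm.coe_mul, Pi.smul_apply, Pi.sub_apply, Pi.mul_apply,
    Pi.pow_apply, smul_eq_mul] at hz ⊢
  push_cast at hz
  linear_combination hz

lemma normalizedDerivOfComplex_iterate_two_E2 :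
    D^[2] E₂ = (72⁻¹ : ℂ) • (E₂ ^ 3 - (3 : ℂ) • (E₂ * ⇑E₄) + (2 : ℂ) • ⇑E₆) := by
  have hE₂ := E2_mdifferentiable
  have hE₄ : MDiff E₄ := E₄.holo'
  rw [Function.iterate_succ_apply', Function.iterate_one, normalizedDerivOfComplex_E2,
    normalizedDerivOfComplex_smul _ _ ((hE₂.pow 2).sub hE₄),
    normalizedDerivOfComplex_sub _ _ (hE₂.pow 2) hE₄, normalizedDerivOfComplex_pow _ _ hE₂,
    normalizedDerivOfComplex_E2, normalizedDerivOfComplex_E₄]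
  ext z
  simp only [Nat.cast_ofNat, Pi.ofNat_apply, Pi.add_apply, Pi.sub_apply, Pi.smul_apply,
    Pi.mul_apply, Pi.pow_apply, smul_eq_mul]
  ring

lemma normalizedDerivOfComplex_iterate_three_E2 :
    D^[3] E₂ = (288⁻¹ : ℂ) •
      (E₂ ^ 4 - (6 : ℂ) • (E₂ ^ 2 * ⇑E₄) - (3 : ℂ) • (⇑E₄ ^ 2) + (8 : ℂ) • (E₂ * ⇑E₆)) := by
  have hE₂ := E2_mdifferentiable
  have hE₄ : MDiff E₄ := E₄.holo'
  have hE₆ : MDiff E₆ := E₆.holo'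
  have hE₂₄ := hE₂.mul hE₄
  rw [Function.iterate_succ_apply', normalizedDerivOfComplex_iterate_two_E2,
    normalizedDerivOfComplex_smul _ _
      (((hE₂.pow 3).sub (hE₂₄.const_smul _)).add (hE₆.const_smul _)),
    normalizedDerivOfComplex_add _ _ ((hE₂.pow 3).sub (hE₂₄.const_smul _)) (hE₆.const_smul _),
    normalizedDerivOfComplex_sub _ _ (hE₂.pow 3) (hE₂₄.const_smul _),
    normalizedDerivOfComplex_pow _ _ hE₂, normalizedDerivOfComplex_smul _ _ hE₂₄,
    normalizedDerivOfComplex_smul _ _ hE₆, normalizedDerivOfComplex_mul _ _ hE₂ hE₄,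
    normalizedDerivOfComplex_E2, normalizedDerivOfComplex_E₄, normalizedDerivOfComplex_E₆]
  ext z
  simp only [Nat.cast_ofNat, Pi.ofNat_apply, Pi.add_apply, Pi.sub_apply, Pi.smul_apply,
    Pi.mul_apply, Pi.pow_apply, smul_eq_mul]
  ring

theorem chazy_E2 (z : ℍ) :
    2 * D^[3] E₂ z - 2 * E₂ z * D^[2] E₂ z + 3 * D E₂ z ^ 2 = 0 := by
  rw [normalizedDerivOfComplex_iterate_three_E2, normalizedDerivOfComplex_iterate_two_E2,
    normalizedDerivOfComplex_E2]
  simp only [Pi.smul_apply, Pi.add_apply, Pi.sub_apply, Pi.pow_apply, Pi.mul_apply, smul_eq_mul]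
  ring

lemma E2_coe_eq (z : ℍ) : E2 z = E₂ z := by
  rw [EisensteinSeries.E2_eq_tsum_cexp,
    tsum_pnat_eq_tsum_succ (f := fun n ↦ (ArithmeticFunction.sigma 1 n : ℂ) * _ ^ n)]
  simp [E2, sigma', qq, ArithmeticFunction.sigma_apply]

lemma nderiv_eq_normalizedDerivOfComplex {f : ℂ → ℂ} (hfF : ∀ z : ℍ, f z = F z) (z : ℍ) :
    nderiv f z = D F z := by
  have heq : f =ᶠ[𝓝 (z : ℂ)] F ∘ ofComplex := by
    filter_upwards [isOpen_upperHalfPlaneSet.mem_nhds z.im_pos] with w hw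
    rw [Function.comp_apply, ofComplex_apply_of_im_pos hw]
    exact hfF ⟨w, hw⟩
  rw [nderiv, normalizedDerivOfComplex, heq.deriv_eq]

end Ramanujan

/-- The quasi-modular Eisenstein series `E₂` satisfies the Chazy equation. -/
theorem E2_chazy :
    ∀ τ : ℂ, 0 < τ.im →
      2 * nderiv (nderiv (nderiv E2)) τ - 2 * E2 τ * nderiv (nderiv E2) τ +
        3 * (nderiv E2 τ) ^ 2 = 0 := by
  intro τ hτ
  lift τ to UpperHalfPlane using hτ
  have hD := nderiv_eq_normalizedDerivOfComplex E2_coe_eq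
  have hD2 := nderiv_eq_normalizedDerivOfComplex hD
  have hD3 := nderiv_eq_normalizedDerivOfComplex hD2
  rw [hD3, hD2, hD, E2_coe_eq]
  exact chazy_E2 τ
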